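/- Let d ≥ 2 and r ∈ [1,∞]. There is a constant C = C(d,r) such that for all a, f ∈ C^∞(𝕋^d), the bilinear anti-divergence operator satisfies ‖𝓑(a,f)‖_{L^r(𝕋^d)} ≤ C ‖a‖_{C^1} ‖ℛf‖_{L^r(𝕋^d)}. -/

import Mathlib

open MeasureTheory ENNReal

noncomputable section

/-- Points of `ℝ^d` (representing the torus `𝕋^d = ℝ^d/ℤ^d` via periodic functions). -/
abbrev Vec (d : ℕ) := Fin d → ℝ

/-- One fundamental domain `[0,1]^d` of the torus. -/
def fundCube (d : ℕ) : Set (Vec d) := Set.Icc 0 1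

/-- `ℤ^d`-periodicity of a function on `ℝ^d`. -/
def ZPer {d : ℕ} {α : Type*} (f : Vec d → α) : Prop :=
  ∀ (x : Vec d) (k : Fin d → ℤ), f (x + fun i => (k i : ℝ)) = f x

/-- Generic `L^p` "norm" (`p ∈ [1,∞]` as `ℝ≥0∞`) of an `ℝ≥0∞`-valued function. -/
def eLpGen {α : Type*} [MeasurableSpace α] (μ : Measure α) (p : ℝ≥0∞)
    (g : α → ℝ≥0∞) : ℝ≥0∞ :=
  if p = ∞ then essSup g μ
  else (∫⁻ a, g a ^ p.toReal ∂μ) ^ (1 / p.toReal)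

/-- Spatial `L^p` norm over one fundamental domain of the torus. -/
def spLp {d : ℕ} {E : Type*} [NormedAddCommGroup E] (p : ℝ≥0∞)
    (f : Vec d → E) : ℝ≥0∞ :=
  eLpGen (volume.restrict (fundCube d)) p (fun x => (‖f x‖₊ : ℝ≥0∞))

/-- `W^{1,q}` norm of a vector field on the torus: `‖u‖_{L^q} + ‖∇u‖_{L^q}`. -/
def W1qNorm {d : ℕ} (q : ℝ≥0∞) (u : Vec d → Vec d) : ℝ≥0∞ :=
  spLp q u + spLp q (fderiv ℝ u)

/-- `L^s(0,T;L^p(𝕋^d))` norm. -/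
def LsLpT {d : ℕ} {E : Type*} [NormedAddCommGroup E] (T : ℝ) (s p : ℝ≥0∞)
    (f : ℝ → Vec d → E) : ℝ≥0∞ :=
  eLpGen (volume.restrict (Set.Ioo 0 T)) s (fun t => spLp p (f t))

/-- `L^s(0,T;W^{1,q}(𝕋^d))` norm. -/
def LsW1qT {d : ℕ} (T : ℝ) (s q : ℝ≥0∞) (u : ℝ → Vec d → Vec d) : ℝ≥0∞ :=
  eLpGen (volume.restrict (Set.Ioo 0 T)) s (fun t => W1qNorm q (u t))

/-- Gradient of a scalar function on `ℝ^d`. -/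
def gradV {d : ℕ} (f : Vec d → ℝ) (x : Vec d) : Vec d :=
  fun i => fderiv ℝ f x (Pi.single i 1)

/-- Divergence of a vector field on `ℝ^d`. -/
def divV {d : ℕ} (v : Vec d → Vec d) (x : Vec d) : ℝ :=
  ∑ i, fderiv ℝ (fun y => v y i) x (Pi.single i 1)

/-- Laplacian of a scalar function on `ℝ^d`. -/
def laplV {d : ℕ} (f : Vec d → ℝ) : Vec d → ℝ := divV (gradV f)

/-- Euclidean dot product on `ℝ^d`. -/
def dotV {d : ℕ} (a b : Vec d) : ℝ := ∑ i, a i * b i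

/-- `C^N` norm over one fundamental domain. -/
def CkN {d : ℕ} (N : ℕ) (φ : Vec d → ℝ) : ℝ :=
  ∑ i ∈ Finset.range (N + 1), sSup ((fun x => ‖iteratedFDeriv ℝ i φ x‖) '' fundCube d)

/-- `W^{m,r}` norm over one fundamental domain. -/
def SobN {d : ℕ} {E : Type*} [NormedAddCommGroup E] [NormedSpace ℝ E]
    (m : ℕ) (r : ℝ≥0∞) (f : Vec d → E) : ℝ≥0∞ :=
  ∑ i ∈ Finset.range (m + 1), spLp r (iteratedFDeriv ℝ i f)

/-- Test functions for the weak formulation on `[0,T) × 𝕋^d`: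
smooth, `ℤ^d`-periodic in space, vanishing for `t` near `T` (compact support in `[0,T)`). -/
def IsTest (d : ℕ) (T : ℝ) (φ : ℝ → Vec d → ℝ) : Prop :=
  ContDiff ℝ (⊤ : ℕ∞) (Function.uncurry φ) ∧ (∀ t, ZPer (φ t)) ∧
    ∃ T', T' < T ∧ ∀ t, T' ≤ t → ∀ x, φ t x = 0

/-- `ρ` is a weak solution on `(0,T) × 𝕋^d` of `∂_t ρ + u·∇ρ = 0` with initial data `ρ₀`. -/
def IsWeakSolution (d : ℕ) (T : ℝ) (u : ℝ → Vec d → Vec d)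
    (ρ : ℝ → Vec d → ℝ) (ρ₀ : Vec d → ℝ) : Prop :=
  ∀ φ : ℝ → Vec d → ℝ, IsTest d T φ →
    ∫ x in fundCube d, ρ₀ x * φ 0 x =
      ∫ t in Set.Ioo 0 T, ∫ x in fundCube d,
        ρ t x * (deriv (fun τ => φ τ x) t + fderiv ℝ (φ t) x (u t x))

/-- `u` is divergence free in the sense of distributions on `(0,T) × 𝕋^d`. -/
def WeaklyDivFree (d : ℕ) (T : ℝ) (u : ℝ → Vec d → Vec d) : Prop :=
  ∀ φ : ℝ → Vec d → ℝ, ContDiff ℝ (⊤ : ℕ∞) (Function.uncurry φ) →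
    (∀ t, ZPer (φ t)) →
    ∫ t in Set.Ioo 0 T, ∫ x in fundCube d, fderiv ℝ (φ t) x (u t x) = 0

end

/-!
Averaging `u` along rays against a radial kernel `φ` of mass one gives, for every scale `S > 0`
and every constant `c`,
`∂ᵢu(x) = -S⁻¹ ∫ ∂ᵢφ(z) (u(x + Sz) - c) dz - ∫₀ˢ ∫ zᵢ φ(z) Δu(x + sz) dz ds`:
write `∂ᵢu(x + Sz) - ∂ᵢu(x)` as the integral of `z · ∇∂ᵢu` along the ray, and move derivatives
on and off `φ` by parts, where the radial symmetry `zⱼ ∂ᵢφ = zᵢ ∂ⱼφ` turns `zⱼ ∂ᵢ∂ⱼu` into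
`zᵢ ∂ⱼ∂ⱼu`. Only translates of `u` and `Δu` occur, so Minkowski's inequality and translation
invariance on the torus yield `‖∇u‖_p ≤ (C/S) ‖u - c‖_p + C S ‖Δu‖_p` for all `p ∈ [1, ∞]`, with
no Calderón–Zygmund theory and hence including the endpoints. By Poincaré's inequality a large
fixed `S` lets the first term be absorbed, so `‖∇u‖_p ≤ C ‖Δu‖_p`. For the potential `u` of
`ℛ(∇a · v)` this gives `‖∇u‖_p ≤ 2C ‖∇a · v‖_p ≤ 2C d ‖a‖_{C¹} ‖v‖_p`.
-/

section LpEstimates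

variable {α β : Type*} [MeasurableSpace α] [MeasurableSpace β] {μ : Measure α} {ν : Measure β}
  {p : ℝ≥0∞}

theorem ennreal_le_two_mul_of_le_half_add {a b : ℝ≥0∞} (ha : a ≠ ∞) (h : a ≤ a / 2 + b) :
    a ≤ 2 * b := by
  have hhalf : a / 2 ≤ b := by
    nth_rw 1 [← ENNReal.add_halves a] at h
    exact (ENNReal.add_le_add_iff_left (ENNReal.div_lt_top ha two_ne_zero).ne).1 h
  calc a = a / 2 + a / 2 := (ENNReal.add_halves a).symm
    _ ≤ b + b := add_le_add hhalf hhalf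
    _ = 2 * b := (two_mul b).symm

theorem enorm_pi_le_iff {ι : Type*} [Fintype ι] {G : ι → Type*} [∀ i, SeminormedAddCommGroup (G i)]
    {v : ∀ i, G i} {c : ℝ≥0∞} : ‖v‖ₑ ≤ c ↔ ∀ i, ‖v i‖ₑ ≤ c := by
  induction c with
  | top => simp
  | coe c => simpa only [enorm_le_coe] using pi_nnnorm_le_iff

theorem enorm_integral_mul_le {k h : α → ℝ} {K : Set α} {B : ℝ} (hkB : ∀ z, ‖k z‖ ≤ B)
    (hkK : ∀ z ∉ K, k z = 0) :
    ‖∫ z, k z * h z ∂μ‖ₑ ≤ ENNReal.ofReal B * ∫⁻ z in K, ‖h z‖ₑ ∂μ := by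
  rw [← setIntegral_eq_integral_of_forall_compl_eq_zero (s := K) fun z hz => by simp [hkK z hz],
    ← lintegral_const_mul' _ _ ENNReal.ofReal_ne_top]
  refine (enorm_integral_le_lintegral_enorm _).trans (lintegral_mono fun z => ?_)
  rw [enorm_mul, ← ofReal_norm (k z)]
  gcongr
  exact hkB z

theorem eLpNorm_sub_integral_le {E : Type*} [NormedAddCommGroup E] [NormedSpace ℝ E]
    [IsProbabilityMeasure μ] {g : α → E} (hp : 1 ≤ p) (hg : AEStronglyMeasurable g μ) :
    eLpNorm (fun x => g x - ∫ y, g y ∂μ) p μ ≤ 2 * eLpNorm g p μ := by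
  have hmean : ‖∫ y, g y ∂μ‖ₑ ≤ eLpNorm g p μ :=
    calc ‖∫ y, g y ∂μ‖ₑ ≤ eLpNorm g 1 μ := by
          rw [eLpNorm_one_eq_lintegral_enorm]; exact enorm_integral_le_lintegral_enorm g
      _ ≤ eLpNorm g p μ := eLpNorm_le_eLpNorm_of_exponent_le hp hg
  calc eLpNorm (fun x => g x - ∫ y, g y ∂μ) p μ
      ≤ eLpNorm g p μ + eLpNorm (fun _ => ∫ y, g y ∂μ) p μ :=
        eLpNorm_sub_le hg aestronglyMeasurable_const hp
    _ ≤ eLpNorm g p μ + eLpNorm g p μ := by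
        rw [eLpNorm_const _ (one_pos.trans_le hp).ne' (NeZero.ne μ)]
        gcongr
        simpa using hmean
    _ = 2 * eLpNorm g p μ := (two_mul _).symm

theorem lintegral_rpow_le_measure_univ_mul {q : ℝ} (hq : 1 ≤ q) {f : β → ℝ≥0∞}
    (hf : AEMeasurable f ν) :
    (∫⁻ z, f z ∂ν) ^ q ≤ ν Set.univ ^ (q - 1) * ∫⁻ z, f z ^ q ∂ν := by
  have hq0 : 0 < q := one_pos.trans_le hq
  have hpow := eLpNorm'_le_eLpNorm'_mul_rpow_measure_univ one_pos hq hf.aestronglyMeasurable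
  simp only [eLpNorm', enorm_eq_self, ENNReal.rpow_one, div_one] at hpow
  calc (∫⁻ z, f z ∂ν) ^ q
      ≤ ((∫⁻ z, f z ^ q ∂ν) ^ (1 / q) * ν Set.univ ^ (1 - 1 / q)) ^ q := by gcongr
    _ = ν Set.univ ^ (q - 1) * ∫⁻ z, f z ^ q ∂ν := by
      rw [ENNReal.mul_rpow_of_nonneg _ _ hq0.le, ← ENNReal.rpow_mul, ← ENNReal.rpow_mul,
        one_div_mul_cancel hq0.ne', ENNReal.rpow_one, sub_mul, one_mul, one_div_mul_cancel hq0.ne',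
        mul_comm]

variable [SFinite μ] [SFinite ν] {F : α → β → ℝ≥0∞} {M : ℝ≥0∞}

theorem eLpNorm_top_lintegral_le (hF : Measurable (Function.uncurry F))
    (hM : ∀ z, eLpNorm (F · z) ∞ μ ≤ M) :
    eLpNorm (fun x => ∫⁻ z, F x z ∂ν) ∞ μ ≤ ν Set.univ * M := by
  have hae : ∀ᵐ x ∂μ, ∀ᵐ z ∂ν, F x z ≤ M := by
    rw [Measure.ae_ae_comm (p := fun x z => F x z ≤ M) (measurableSet_le hF measurable_const)]
    refine Filter.Eventually.of_forall fun z => ?_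
    filter_upwards [enorm_ae_le_eLpNormEssSup (F · z) μ] with x hx
    exact hx.trans (eLpNorm_exponent_top.symm.trans_le (hM z))
  rw [eLpNorm_exponent_top]
  refine essSup_le_of_ae_le _ (hae.mono fun x hx => ?_)
  calc ∫⁻ z, F x z ∂ν ≤ ∫⁻ _, M ∂ν := lintegral_mono_ae hx
    _ = ν Set.univ * M := by rw [lintegral_const, mul_comm]

theorem eLpNorm_lintegral_le (hp : 1 ≤ p) (hF : Measurable (Function.uncurry F))
    (hM : ∀ z, eLpNorm (F · z) p μ ≤ M) :
    eLpNorm (fun x => ∫⁻ z, F x z ∂ν) p μ ≤ ν Set.univ * M := by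
  rcases eq_or_ne p ∞ with rfl | hp_top
  · exact eLpNorm_top_lintegral_le hF hM
  have hp0 : p ≠ 0 := (one_pos.trans_le hp).ne'
  obtain ⟨q, hq⟩ : ∃ q, q = p.toReal := ⟨_, rfl⟩
  have hq1 : 1 ≤ q := by rw [hq]; simpa using ENNReal.toReal_mono hp_top hp
  have hq0 : 0 < q := one_pos.trans_le hq1
  have hslice : ∀ z, ∫⁻ x, F x z ^ q ∂μ ≤ M ^ q := fun z => by
    have := hM z
    rwa [eLpNorm_eq_lintegral_rpow_enorm_toReal hp0 hp_top, one_div, ← hq,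
      ENNReal.rpow_inv_le_iff hq0] at this
  rw [eLpNorm_eq_lintegral_rpow_enorm_toReal hp0 hp_top, one_div, ← hq,
    ENNReal.rpow_inv_le_iff hq0]
  calc ∫⁻ x, ‖∫⁻ z, F x z ∂ν‖ₑ ^ q ∂μ
      ≤ ∫⁻ x, ν Set.univ ^ (q - 1) * ∫⁻ z, F x z ^ q ∂ν ∂μ :=
        lintegral_mono fun x =>
          lintegral_rpow_le_measure_univ_mul hq1 hF.of_uncurry_left.aemeasurable
    _ = ν Set.univ ^ (q - 1) * ∫⁻ x, ∫⁻ z, F x z ^ q ∂ν ∂μ :=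
        lintegral_const_mul _ (hF.pow_const q).lintegral_prod_right'
    _ = ν Set.univ ^ (q - 1) * ∫⁻ z, ∫⁻ x, F x z ^ q ∂μ ∂ν := by
        rw [lintegral_lintegral_swap (hF.pow_const q).aemeasurable]
    _ ≤ ν Set.univ ^ (q - 1) * ∫⁻ _, M ^ q ∂ν := by gcongr with z; exact hslice z
    _ = ν Set.univ ^ (q - 1) * ν Set.univ ^ (1 : ℝ) * M ^ q := by
        rw [lintegral_const, ENNReal.rpow_one]; ring
    _ = (ν Set.univ * M) ^ q := by
        rw [← ENNReal.rpow_add_of_nonneg _ _ (sub_nonneg.2 hq1) zero_le_one, sub_add_cancel,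
          ENNReal.mul_rpow_of_nonneg _ _ hq0.le]

end LpEstimates

section Periodicity

open scoped Pointwise

variable {d : ℕ} {α E : Type*} [NormedAddCommGroup E] {p : ℝ≥0∞}

theorem eLpNorm_restrict_eq_of_isAddFundamentalDomain {G X ε : Type*} [AddGroup G] [Countable G]
    [AddAction G X] [MeasurableSpace X] [ENorm ε] {μ : Measure X} [MeasurableConstVAdd G X]
    [VAddInvariantMeasure G X μ] {s t : Set X} (hs : IsAddFundamentalDomain G s μ)
    (ht : IsAddFundamentalDomain G t μ) {f : X → ε} (hf : ∀ (g : G) x, f (g +ᵥ x) = f x)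
    (p : ℝ≥0∞) : eLpNorm f p (μ.restrict s) = eLpNorm f p (μ.restrict t) := by
  rcases eq_or_ne p 0 with rfl | hp0
  · simp
  rcases eq_or_ne p ∞ with rfl | hp_top
  · simp only [eLpNorm_exponent_top, eLpNormEssSup]
    rw [hs.essSup_measure_restrict fun g x => by rw [hf],
      ht.essSup_measure_restrict fun g x => by rw [hf]]
  · simp only [eLpNorm_eq_lintegral_rpow_enorm_toReal hp0 hp_top]
    rw [hs.setLIntegral_eq ht _ fun g x => by rw [hf]]

/-- Lebesgue measure on the cube `[0,1]^d`, i.e. the probability measure of the torus. -/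
noncomputable abbrev cubeMeasure (d : ℕ) : Measure (Vec d) := volume.restrict (fundCube d)

instance (d : ℕ) : IsProbabilityMeasure (cubeMeasure d) :=
  ⟨by simp [fundCube, Real.volume_Icc_pi]⟩

/-- The lattice `ℤ^d ⊆ ℝ^d`, as the span of the standard basis so that `ZSpan` applies. -/
abbrev integerLattice (d : ℕ) : Submodule ℤ (Vec d) :=
  Submodule.span ℤ (Set.range (Pi.basisFun ℝ (Fin d)))

instance (d : ℕ) : VAddInvariantMeasure (integerLattice d) (Vec d) volume :=
  inferInstanceAs (VAddInvariantMeasure (integerLattice d).toAddSubgroup (Vec d) volume)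

theorem spLp_eq_eLpNorm (hp : 1 ≤ p) (f : Vec d → E) : spLp p f = eLpNorm f p (cubeMeasure d) := by
  rcases eq_or_ne p ∞ with rfl | hp_top
  · rw [eLpNorm_exponent_top, spLp, eLpGen, if_pos rfl]
    rfl
  · rw [eLpNorm_eq_lintegral_rpow_enorm_toReal (one_pos.trans_le hp).ne' hp_top, spLp, eLpGen,
      if_neg hp_top]
    rfl

theorem eLpNorm_cubeMeasure_lt_top_of_continuous {f : Vec d → E} (hf : Continuous f)
    (p : ℝ≥0∞) : eLpNorm f p (cubeMeasure d) < ∞ := by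
  obtain ⟨B, hB⟩ := isCompact_Icc.exists_bound_of_continuousOn (s := fundCube d) hf.continuousOn
  have hmeas : AEStronglyMeasurable f (cubeMeasure d) :=
    hf.continuousOn.aestronglyMeasurable_of_isCompact isCompact_Icc measurableSet_Icc
  exact (MemLp.of_bound hmeas B (ae_restrict_of_forall_mem measurableSet_Icc hB)).eLpNorm_lt_top

theorem isAddFundamentalDomain_vadd (t : Vec d) : IsAddFundamentalDomain (integerLattice d)
    (t +ᵥ ZSpan.fundamentalDomain (Pi.basisFun ℝ (Fin d))) volume :=
  (ZSpan.isAddFundamentalDomain (Pi.basisFun ℝ (Fin d)) volume).vadd_of_comm t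

theorem cubeMeasure_eq_restrict_fundamentalDomain (d : ℕ) :
    cubeMeasure d = volume.restrict (ZSpan.fundamentalDomain (Pi.basisFun ℝ (Fin d))) := by
  rw [ZSpan.fundamentalDomain_pi_basisFun]
  exact (Measure.restrict_congr_set Measure.univ_pi_Ico_ae_eq_Icc).symm

theorem map_addRight_cubeMeasure (t : Vec d) :
    (cubeMeasure d).map (MeasurableEquiv.addRight t) =
      volume.restrict (t +ᵥ ZSpan.fundamentalDomain (Pi.basisFun ℝ (Fin d))) := by
  have hvol : volume.map (MeasurableEquiv.addRight t) = volume := map_add_right_eq_self volume t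
  conv_rhs => rw [← hvol, MeasurableEquiv.restrict_map]
  rw [cubeMeasure_eq_restrict_fundamentalDomain]
  congr 2
  ext x
  simp [Set.mem_vadd_set_iff_neg_vadd_mem]

variable {Z : Type*} [MeasurableSpace Z] {ν : Measure Z} [SFinite ν] {τ : Z → Vec d}

theorem measurable_lintegral_comp_add {h : Vec d → ℝ≥0∞} (hh : Measurable h) (hτ : Measurable τ) :
    Measurable fun x => ∫⁻ z, h (x + τ z) ∂ν :=
  (hh.comp (measurable_fst.add (hτ.comp measurable_snd))).lintegral_prod_right'
    (f := fun q : Vec d × Z => h (q.1 + τ q.2))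

namespace ZPer

theorem vadd_eq {f : Vec d → α} (hf : ZPer f) (g : integerLattice d) (x : Vec d) :
    f (g +ᵥ x) = f x := by
  obtain ⟨g, hg⟩ := g
  rw [Module.Basis.mem_span_iff_repr_mem] at hg
  choose k hk using hg
  have hgk : g = fun i => (k i : ℝ) := funext fun i => by simpa using (hk i).symm
  rw [Submodule.vadd_def, vadd_eq_add, add_comm]
  subst hgk
  exact hf x k

theorem integral_comp_add_right [NormedSpace ℝ E] {f : Vec d → E} (hf : ZPer f) (t : Vec d) :
    ∫ x, f (x + t) ∂cubeMeasure d = ∫ x, f x ∂cubeMeasure d := by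
  calc ∫ x, f (x + t) ∂cubeMeasure d
      = ∫ x, f x ∂(cubeMeasure d).map (MeasurableEquiv.addRight t) :=
        (integral_map_equiv (MeasurableEquiv.addRight t) f).symm
    _ = ∫ x, f x ∂cubeMeasure d := by
      rw [map_addRight_cubeMeasure, cubeMeasure_eq_restrict_fundamentalDomain]
      exact (isAddFundamentalDomain_vadd t).setIntegral_eq
        (ZSpan.isAddFundamentalDomain _ volume) hf.vadd_eq

theorem eLpNorm_comp_add_right {ε : Type*} [TopologicalSpace ε] [ContinuousENorm ε]
    {f : Vec d → ε} (hf : ZPer f) (t : Vec d) (p : ℝ≥0∞) :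
    eLpNorm (fun x => f (x + t)) p (cubeMeasure d) = eLpNorm f p (cubeMeasure d) := by
  calc eLpNorm (fun x => f (x + t)) p (cubeMeasure d)
      = eLpNorm f p ((cubeMeasure d).map (MeasurableEquiv.addRight t)) :=
        ((MeasurableEquiv.addRight t).measurableEmbedding.eLpNorm_map_measure).symm
    _ = eLpNorm f p (cubeMeasure d) := by
      rw [map_addRight_cubeMeasure, cubeMeasure_eq_restrict_fundamentalDomain]
      exact eLpNorm_restrict_eq_of_isAddFundamentalDomain (isAddFundamentalDomain_vadd t)
        (ZSpan.isAddFundamentalDomain _ volume) hf.vadd_eq p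

theorem eLpNorm_mul_lintegral_comp_add_le {h : Vec d → ℝ≥0∞} (hper : ZPer h) (hh : Measurable h)
    (hτ : Measurable τ) (c : ℝ≥0∞) (hp : 1 ≤ p) :
    eLpNorm (fun x => c * ∫⁻ z, h (x + τ z) ∂ν) p (cubeMeasure d) ≤
      c * ν Set.univ * eLpNorm h p (cubeMeasure d) := by
  have hmeas : Measurable fun q : Vec d × Z => h (q.1 + τ q.2) :=
    hh.comp (measurable_fst.add (hτ.comp measurable_snd))
  simp only [← smul_eq_mul c, ← lintegral_smul_measure, ← Measure.smul_apply]
  exact eLpNorm_lintegral_le hp hmeas fun z => (hper.eLpNorm_comp_add_right (τ z) p).le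

theorem enorm {f : Vec d → E} (hf : ZPer f) : ZPer fun x => ‖f x‖ₑ := fun x k => by
  simp only [hf x k]

end ZPer

end Periodicity

section VectorCalculus

variable {d : ℕ} {u : Vec d → ℝ}

theorem dotV_gradV (u : Vec d → ℝ) (x y : Vec d) : dotV (gradV u x) y = fderiv ℝ u x y := by
  conv_rhs => rw [pi_eq_sum_univ' y]
  simp only [dotV, gradV, map_sum, map_smul, smul_eq_mul, mul_comm]

theorem norm_dotV_le (a b : Vec d) : ‖dotV a b‖ ≤ d * ‖a‖ * ‖b‖ := by
  calc ‖dotV a b‖ ≤ ∑ i, ‖a i * b i‖ := norm_sum_le _ _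
    _ ≤ ∑ _i : Fin d, ‖a‖ * ‖b‖ := by
      gcongr with i
      rw [norm_mul]
      gcongr
      exacts [norm_le_pi_norm a i, norm_le_pi_norm b i]
    _ = d * ‖a‖ * ‖b‖ := by simp [mul_assoc]

theorem enorm_dotV_le (a b : Vec d) : ‖dotV a b‖ₑ ≤ d * ‖a‖ₑ * ‖b‖ₑ := by
  simpa only [ENNReal.ofReal_mul (mul_nonneg (Nat.cast_nonneg d) (norm_nonneg a)),
    ENNReal.ofReal_mul (Nat.cast_nonneg d), ENNReal.ofReal_natCast, ofReal_norm]
    using ENNReal.ofReal_le_ofReal (norm_dotV_le a b)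

theorem aestronglyMeasurable_dotV {α : Type*} [MeasurableSpace α] {μ : Measure α}
    {v w : α → Vec d} (hv : AEStronglyMeasurable v μ) (hw : AEStronglyMeasurable w μ) :
    AEStronglyMeasurable (fun x => dotV (v x) (w x)) μ := by
  simp only [dotV]
  fun_prop

theorem norm_gradV_le_norm_fderiv (u : Vec d → ℝ) (x : Vec d) : ‖gradV u x‖ ≤ ‖fderiv ℝ u x‖ := by
  refine (pi_norm_le_iff_of_nonneg (norm_nonneg _)).2 fun i => ?_
  simpa [gradV, Pi.norm_single] using (fderiv ℝ u x).le_opNorm (Pi.single i 1)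

theorem gradV_eq_zero_of_notMem_tsupport {x : Vec d} (hx : x ∉ tsupport u) : gradV u x = 0 := by
  funext i
  simp [gradV, fderiv_of_notMem_tsupport (𝕜 := ℝ) hx]

theorem contDiff_gradV {n m : WithTop ℕ∞} (hu : ContDiff ℝ n u) (hmn : m + 1 ≤ n) :
    ContDiff ℝ m (gradV u) :=
  contDiff_pi.2 fun _ => (hu.fderiv_right hmn).clm_apply contDiff_const

theorem continuous_gradV (hu : ContDiff ℝ 1 u) : Continuous (gradV u) :=
  (contDiff_gradV (m := 0) hu (by simp)).continuous

theorem contDiff_gradV_apply (hu : ContDiff ℝ 2 u) (i : Fin d) :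
    ContDiff ℝ 1 fun y => gradV u y i :=
  contDiff_pi.1 (contDiff_gradV hu (by norm_num)) i

theorem continuous_laplV (hu : ContDiff ℝ 2 u) : Continuous (laplV u) :=
  continuous_finsetSum Finset.univ fun i _ =>
    ((contDiff_gradV_apply hu i).continuous_fderiv one_ne_zero).clm_apply continuous_const

theorem gradV_gradV_comm (hu : ContDiff ℝ 2 u) (i j : Fin d) (x : Vec d) :
    gradV (fun y => gradV u y i) x j = gradV (fun y => gradV u y j) x i := by
  have hdiff : DifferentiableAt ℝ (fderiv ℝ u) x :=
    (hu.fderiv_right (m := 1) (by norm_num)).differentiable one_ne_zero x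
  have hsecond : ∀ i j, gradV (fun y => gradV u y i) x j =
      fderiv ℝ (fderiv ℝ u) x (Pi.single j 1) (Pi.single i 1) := fun i j => by
    simp only [gradV]
    rw [fderiv_clm_apply hdiff (differentiableAt_const _)]
    simp
  rw [hsecond, hsecond]
  exact (hu.contDiffAt.isSymmSndFDerivAt (by simp)).eq _ _

theorem ZPer.fderiv (hu : ZPer u) : ZPer (fderiv ℝ u) := fun x k => by
  rw [← fderiv_comp_add_right]
  congr 1
  exact funext fun y => hu y k

theorem ZPer.gradV (hu : ZPer u) : ZPer (gradV u) := fun x k => by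
  funext i
  simp only [_root_.gradV, hu.fderiv x k]

theorem ZPer.laplV (hu : ZPer u) : ZPer (laplV u) := fun x k => by
  have hcomp : ∀ i, ZPer fun y => _root_.gradV u y i := fun i y k => congrFun (hu.gradV y k) i
  simp only [_root_.laplV, divV, (hcomp _).fderiv x k]

end VectorCalculus

section Averaging

variable {E : Type*} [NormedAddCommGroup E] [NormedSpace ℝ E] {φ w : E → ℝ}

theorem integral_fderiv_segment (hw : ContDiff ℝ 1 w) (x z : E) (S : ℝ) :
    ∫ s in 0..S, fderiv ℝ w (x + s • z) z = w (x + S • z) - w x := by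
  have hcont : Continuous fun s : ℝ => fderiv ℝ w (x + s • z) z :=
    ((hw.continuous_fderiv one_ne_zero).comp (by fun_prop)).clm_apply continuous_const
  have hderiv : ∀ s : ℝ, HasDerivAt (fun s : ℝ => w (x + s • z)) (fderiv ℝ w (x + s • z) z) s :=
    fun s => (hw.differentiable one_ne_zero _).hasFDerivAt.comp_hasDerivAt s <| by
      simpa using ((hasDerivAt_id s).smul_const z).const_add x
  rw [intervalIntegral.integral_eq_sub_of_hasDerivAt (fun s _ => hderiv s)
    (hcont.intervalIntegrable _ _)]
  simp

variable [MeasurableSpace E] [BorelSpace E] {μ : Measure E}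

theorem integral_mul_sub_eq_integral_integral_fderiv [IsFiniteMeasureOnCompacts μ] [SFinite μ]
    (hφ : Continuous φ) (hφs : HasCompactSupport φ) (hw : ContDiff ℝ 1 w) (x : E) (S : ℝ) :
    ∫ z, φ z * (w (x + S • z) - w x) ∂μ =
      ∫ s in 0..S, ∫ z, φ z * fderiv ℝ w (x + s • z) z ∂μ := by
  have := hw.continuous_fderiv one_ne_zero
  have hrestrict : ∀ h : E → ℝ, ∫ z, φ z * h z ∂μ = ∫ z in tsupport φ, φ z * h z ∂μ := fun h =>
    (setIntegral_eq_integral_of_forall_compl_eq_zero fun z hz => by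
      simp [image_eq_zero_of_notMem_tsupport hz]).symm
  have hint : Integrable (fun q : ℝ × E => φ q.2 * fderiv ℝ w (x + q.1 • q.2) q.2)
      ((volume.restrict (Set.uIoc 0 S)).prod (μ.restrict (tsupport φ))) := by
    rw [Measure.prod_restrict]
    refine IntegrableOn.mono_set ?_ (Set.prod_mono Set.uIoc_subset_uIcc le_rfl)
    exact ContinuousOn.integrableOn_compact (isCompact_uIcc.prod hφs)
      (Continuous.continuousOn (by fun_prop))
  simp only [hrestrict]
  rw [intervalIntegral_integral_swap hint]
  simp only [intervalIntegral.integral_const_mul, integral_fderiv_segment hw]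

theorem mul_integral_mul_fderiv_comp_add_smul [FiniteDimensional ℝ E] [μ.IsAddHaarMeasure]
    (hφ : ContDiff ℝ 1 φ) (hφs : HasCompactSupport φ) (hw : ContDiff ℝ 1 w) (x e : E) (s : ℝ) :
    s * ∫ z, φ z * fderiv ℝ w (x + s • z) e ∂μ = -∫ z, fderiv ℝ φ z e * w (x + s • z) ∂μ := by
  have hg : ContDiff ℝ 1 fun z : E => w (x + s • z) := by fun_prop
  have hg_fderiv : ∀ z, fderiv ℝ (fun z : E => w (x + s • z)) z e =
      s * fderiv ℝ w (x + s • z) e := fun z => by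
    have h := (hw.differentiable one_ne_zero (x + s • z)).hasFDerivAt.comp z
      (((hasFDerivAt_id z).const_smul s).const_add x)
    rw [show fderiv ℝ (fun z : E => w (x + s • z)) z = _ from h.fderiv]
    simp
  have := hφ.continuous_fderiv one_ne_zero
  have := hg.continuous_fderiv one_ne_zero
  have := hg.continuous
  have hφs' : HasCompactSupport fun z => fderiv ℝ φ z e := hφs.fderiv_apply ℝ e
  rw [← integral_mul_fderiv_eq_neg_fderiv_mul_of_integrable
    ((by fun_prop : Continuous _).integrable_of_hasCompactSupport hφs'.mul_right)
    ((by fun_prop : Continuous _).integrable_of_hasCompactSupport hφs.mul_right)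
    ((by fun_prop : Continuous _).integrable_of_hasCompactSupport hφs.mul_right)
    (fun z _ => hφ.differentiable one_ne_zero z) (fun z _ => hg.differentiable one_ne_zero z),
    ← integral_const_mul]
  simp only [hg_fderiv, mul_left_comm]

end Averaging

section RadialKernel

variable {d : ℕ}

/-- An unnormalised smooth radial cutoff on `ℝ^d`. The Euclidean norm is written out because
`Vec d` carries the sup norm. -/
noncomputable def radialBump (d : ℕ) (z : Vec d) : ℝ := Real.smoothTransition (2 - ∑ i, z i ^ 2)

theorem contDiff_radialBump (d : ℕ) {n : ℕ∞} : ContDiff ℝ n (radialBump d) :=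
  Real.smoothTransition.contDiff.comp (by fun_prop)

theorem hasCompactSupport_radialBump (d : ℕ) : HasCompactSupport (radialBump d) := by
  refine HasCompactSupport.intro (isCompact_closedBall 0 2) fun z hz => ?_
  obtain ⟨i, hi⟩ : ∃ i, 2 < |z i| := by
    simpa [pi_norm_le_iff_of_nonneg] using hz
  have hle : z i ^ 2 ≤ ∑ i, z i ^ 2 :=
    Finset.single_le_sum (f := fun i => z i ^ 2) (fun _ _ => sq_nonneg _) (Finset.mem_univ i)
  refine Real.smoothTransition.zero_of_nonpos ?_
  nlinarith [sq_abs (z i)]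

theorem integral_radialBump_pos (d : ℕ) : 0 < ∫ z, radialBump d z := by
  have hcont : Continuous (radialBump d) := (contDiff_radialBump d (n := 0)).continuous
  refine hcont.integral_pos_of_hasCompactSupport_nonneg_nonzero (x := 0)
    (hasCompactSupport_radialBump d) (fun z => Real.smoothTransition.nonneg _) ?_
  rw [radialBump, Real.smoothTransition.one_of_one_le (by simp)]
  exact one_ne_zero

theorem gradV_radialBump (z : Vec d) :
    gradV (radialBump d) z = (-2 * deriv Real.smoothTransition (2 - ∑ i, z i ^ 2)) • z := by
  have hsq : HasFDerivAt (fun z : Vec d => 2 - ∑ i, z i ^ 2)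
      (-∑ j, (2 * z j) • (ContinuousLinearMap.proj j : Vec d →L[ℝ] ℝ)) z :=
    .const_sub (.fun_sum fun j _ => by simpa using (hasFDerivAt_apply (𝕜 := ℝ) j z).pow 2) 2
  have hbump : HasFDerivAt (radialBump d) _ z :=
    ((Real.smoothTransition.contDiff (n := 1)).differentiable one_ne_zero
      (2 - ∑ i, z i ^ 2)).hasDerivAt.comp_hasFDerivAt z hsq
  ext i
  simp only [gradV, hbump.fderiv]
  simp only [smul_neg, neg_apply, smul_apply, sum_apply, ContinuousLinearMap.proj_apply,
    Pi.single_apply, smul_eq_mul, mul_ite, mul_one, mul_zero, Finset.sum_ite_eq',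
    Finset.mem_univ, ↓reduceIte, neg_mul, Pi.smul_apply, neg_inj]
  ring

/-- A `C¹` averaging kernel of mass one whose gradient is parallel to the position vector. This
is radial symmetry in infinitesimal form: `φ` is invariant under all rotations
`z_j ∂_i - z_i ∂_j`. -/
structure IsRadialKernel (φ : Vec d → ℝ) : Prop where
  contDiff : ContDiff ℝ 1 φ
  hasCompactSupport : HasCompactSupport φ
  integral_eq_one : ∫ z, φ z = 1
  mul_gradV_comm : ∀ z i j, z j * gradV φ z i = z i * gradV φ z j

theorem exists_isRadialKernel (d : ℕ) : ∃ φ : Vec d → ℝ, IsRadialKernel φ := by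
  refine ⟨fun z => (∫ y, radialBump d y)⁻¹ * radialBump d z,
    contDiff_const.mul (contDiff_radialBump d), (hasCompactSupport_radialBump d).mul_left, ?_,
    fun z i j => ?_⟩
  · rw [integral_const_mul, inv_mul_cancel₀ (integral_radialBump_pos d).ne']
  · have hgrad : ∀ i, gradV (fun z => (∫ y, radialBump d y)⁻¹ * radialBump d z) z i =
        (∫ y, radialBump d y)⁻¹ * gradV (radialBump d) z i := fun i => by
      simp only [gradV]
      rw [fderiv_const_mul ((contDiff_radialBump d (n := 1)).differentiable one_ne_zero z)]
      rfl
    simp only [hgrad, gradV_radialBump, Pi.smul_apply, smul_eq_mul]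
    ring

namespace IsRadialKernel

variable {φ u w : Vec d → ℝ} (hφ : IsRadialKernel φ)

include hφ

theorem integral_mul_gradV_comm (hw : ContDiff ℝ 1 w) (x : Vec d) {s : ℝ} (hs : s ≠ 0)
    (i j : Fin d) :
    ∫ z, z j * φ z * gradV w (x + s • z) i = ∫ z, z i * φ z * gradV w (x + s • z) j := by
  have hcontDiff : ∀ i : Fin d, ContDiff ℝ 1 fun z : Vec d => z i * φ z := fun i =>
    (contDiff_apply ℝ ℝ i).mul hφ.contDiff
  have hparts : ∀ i j : Fin d, s * ∫ z, z j * φ z * gradV w (x + s • z) i =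
      -∫ z, gradV (fun z : Vec d => z j * φ z) z i * w (x + s • z) := fun i j =>
    mul_integral_mul_fderiv_comp_add_smul (hcontDiff j) hφ.hasCompactSupport.mul_left hw x _ s
  have hgrad : ∀ (i j : Fin d) z, gradV (fun z : Vec d => z j * φ z) z i =
      Pi.single (M := fun _ => ℝ) i (φ z) j + z j * gradV φ z i := fun i j z => by
    have h := (hasFDerivAt_apply (𝕜 := ℝ) j z).mul
      (hφ.contDiff.differentiable one_ne_zero z).hasFDerivAt
    simp only [gradV]
    rw [show fderiv ℝ (fun z : Vec d => z j * φ z) z = _ from h.fderiv]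
    simp [Pi.single_apply, add_comm]
  refine mul_left_cancel₀ hs ?_
  simp only [hparts, hgrad, hφ.mul_gradV_comm _ i j, Pi.single_apply, eq_comm]

theorem integrable_apply_mul_gradV (hw : ContDiff ℝ 1 w) (x : Vec d) (s : ℝ) (i j : Fin d) :
    Integrable fun z => z i * φ z * gradV w (x + s • z) j := by
  have hgrad : Continuous fun y => gradV w y j := (continuous_apply j).comp (continuous_gradV hw)
  have := hφ.contDiff.continuous
  exact (by fun_prop : Continuous _).integrable_of_hasCompactSupport
    hφ.hasCompactSupport.mul_left.mul_right

theorem integral_mul_fderiv_gradV (hu : ContDiff ℝ 2 u) (x : Vec d) {s : ℝ} (hs : s ≠ 0)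
    (i : Fin d) :
    ∫ z, φ z * fderiv ℝ (fun y => gradV u y i) (x + s • z) z =
      ∫ z, z i * φ z * laplV u (x + s • z) := by
  have hgrad := contDiff_gradV_apply hu
  have hint := fun j => hφ.integrable_apply_mul_gradV (hgrad j) x s
  calc ∫ z, φ z * fderiv ℝ (fun y => gradV u y i) (x + s • z) z
      = ∫ z, ∑ j, z j * φ z * gradV (fun y => gradV u y j) (x + s • z) i := by
        congr 1 with z
        rw [← dotV_gradV, dotV, Finset.mul_sum]
        refine Finset.sum_congr rfl fun j _ => ?_
        rw [gradV_gradV_comm hu]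
        ring
    _ = ∑ j, ∫ z, z j * φ z * gradV (fun y => gradV u y j) (x + s • z) i :=
        integral_finsetSum _ fun j _ => hint j j i
    _ = ∑ j, ∫ z, z i * φ z * gradV (fun y => gradV u y j) (x + s • z) j :=
        Finset.sum_congr rfl fun j _ => hφ.integral_mul_gradV_comm (hgrad j) x hs i j
    _ = ∫ z, z i * φ z * laplV u (x + s • z) := by
        rw [← integral_finsetSum _ fun j _ => hint j i j]
        congr 1 with z
        rw [← Finset.mul_sum]
        rfl

theorem gradV_eq (hu : ContDiff ℝ 2 u) (x : Vec d) (c : ℝ) {S : ℝ} (hS : 0 < S) (i : Fin d) :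
    gradV u x i = -(S⁻¹ * ∫ z, gradV φ z i * (u (x + S • z) - c)) -
      ∫ s in 0..S, ∫ z, z i * φ z * laplV u (x + s • z) := by
  have hgrad := contDiff_gradV_apply hu i
  have := hφ.contDiff.continuous
  have := hgrad.continuous
  have haverage : ∫ z, φ z * (gradV u (x + S • z) i - gradV u x i) =
      (∫ z, φ z * gradV u (x + S • z) i) - gradV u x i := by
    simp only [mul_sub]
    rw [integral_sub, integral_mul_const, hφ.integral_eq_one, one_mul] <;>
      exact (by fun_prop : Continuous _).integrable_of_hasCompactSupport
        hφ.hasCompactSupport.mul_right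
  have htaylor : ∫ z, φ z * (gradV u (x + S • z) i - gradV u x i) =
      ∫ s in 0..S, ∫ z, z i * φ z * laplV u (x + s • z) := by
    rw [integral_mul_sub_eq_integral_integral_fderiv hφ.contDiff.continuous hφ.hasCompactSupport
      hgrad]
    refine intervalIntegral.integral_congr_ae (Filter.Eventually.of_forall fun s hs => ?_)
    rw [Set.uIoc_of_le hS.le] at hs
    exact hφ.integral_mul_fderiv_gradV hu x hs.1.ne' i
  have hparts : S * ∫ z, φ z * gradV u (x + S • z) i = -∫ z, gradV φ z i * (u (x + S • z) - c) := by
    have h := mul_integral_mul_fderiv_comp_add_smul (μ := volume) hφ.contDiff hφ.hasCompactSupport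
      ((hu.of_le one_le_two).sub (contDiff_const (c := c))) x (Pi.single i 1) S
    simp only [fderiv_sub_const] at h
    exact h
  rw [← htaylor, haverage, ← mul_neg, ← hparts, inv_mul_cancel_left₀ hS.ne']
  ring

theorem exists_norm_gradV_le_and_norm_smul_le : ∃ B : ℝ, ∀ z, ‖gradV φ z‖ ≤ B ∧ ‖φ z • z‖ ≤ B := by
  have hgrad : HasCompactSupport (gradV φ) :=
    HasCompactSupport.intro hφ.hasCompactSupport fun z => gradV_eq_zero_of_notMem_tsupport
  have hsmul : HasCompactSupport fun z => φ z • z := hφ.hasCompactSupport.smul_right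
  obtain ⟨B₁, hB₁⟩ := hgrad.exists_bound_of_continuous (continuous_gradV hφ.contDiff)
  obtain ⟨B₂, hB₂⟩ :=
    hsmul.exists_bound_of_continuous (hφ.contDiff.continuous.smul continuous_id)
  exact ⟨max B₁ B₂, fun z =>
    ⟨(hB₁ z).trans (le_max_left _ _), (hB₂ z).trans (le_max_right _ _)⟩⟩

theorem enorm_gradV_le_add {B : ℝ} (hB : ∀ z, ‖gradV φ z‖ ≤ B ∧ ‖φ z • z‖ ≤ B)
    (hu : ContDiff ℝ 2 u) (x : Vec d) (c : ℝ) {S : ℝ} (hS : 0 < S) :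
    ‖gradV u x‖ₑ ≤
      ENNReal.ofReal (B / S) * (∫⁻ z in tsupport φ, ‖u (x + S • z) - c‖ₑ) +
      ENNReal.ofReal B * ∫⁻ q, ‖laplV u (x + q.1 • q.2)‖ₑ
        ∂(volume.restrict (Set.Ioc 0 S)).prod (volume.restrict (tsupport φ)) := by
  refine enorm_pi_le_iff.2 fun i => ?_
  have hlapl := continuous_laplV hu
  have hboundary : ‖∫ z, gradV φ z i * (u (x + S • z) - c)‖ₑ ≤
      ENNReal.ofReal B * ∫⁻ z in tsupport φ, ‖u (x + S • z) - c‖ₑ :=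
    enorm_integral_mul_le (fun z => (norm_le_pi_norm _ i).trans (hB z).1) fun z hz => by
      rw [gradV_eq_zero_of_notMem_tsupport hz, Pi.zero_apply]
  have hbulk : ∀ s : ℝ, ‖∫ z, z i * φ z * laplV u (x + s • z)‖ₑ ≤
      ENNReal.ofReal B * ∫⁻ z in tsupport φ, ‖laplV u (x + s • z)‖ₑ := fun s =>
    enorm_integral_mul_le
      (fun z => by simpa [mul_comm] using (norm_le_pi_norm (φ z • z) i).trans (hB z).2)
      fun z hz => by rw [image_eq_zero_of_notMem_tsupport hz, mul_zero]
  rw [hφ.gradV_eq hu x c hS i, intervalIntegral.integral_of_le hS.le]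
  refine enorm_sub_le.trans (add_le_add ?_ ?_)
  · rw [enorm_neg, enorm_mul, Real.enorm_of_nonneg (inv_nonneg.2 hS.le), div_eq_inv_mul,
      ENNReal.ofReal_mul (inv_nonneg.2 hS.le), mul_assoc]
    gcongr
  · rw [lintegral_prod _ (by fun_prop), ← lintegral_const_mul' _ _ ENNReal.ofReal_ne_top]
    exact (enorm_integral_le_lintegral_enorm _).trans (lintegral_mono hbulk)

end IsRadialKernel

end RadialKernel

section EllipticEstimate

variable {d : ℕ} {u : Vec d → ℝ} {p : ℝ≥0∞}

theorem IsRadialKernel.eLpNorm_gradV_le_add {φ : Vec d → ℝ} (hφ : IsRadialKernel φ) {B : ℝ}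
    (hB : ∀ z, ‖gradV φ z‖ ≤ B ∧ ‖φ z • z‖ ≤ B) (hp : 1 ≤ p) (hu : ContDiff ℝ 2 u)
    (hper : ZPer u) (c : ℝ) {S : ℝ} (hS : 0 < S) :
    eLpNorm (gradV u) p (cubeMeasure d) ≤
      ENNReal.ofReal (B / S) * volume (tsupport φ) *
        eLpNorm (fun x => u x - c) p (cubeMeasure d) +
      ENNReal.ofReal B * (ENNReal.ofReal S * volume (tsupport φ)) *
        eLpNorm (laplV u) p (cubeMeasure d) := by
  have hc : ZPer fun x => u x - c := fun x k => by simp only [hper x k]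
  have hu_meas : Measurable fun x => ‖u x - c‖ₑ :=
    (hu.continuous.sub continuous_const).enorm.measurable
  have hlapl_meas : Measurable fun x => ‖laplV u x‖ₑ := (continuous_laplV hu).enorm.measurable
  have hscale : Measurable fun z : Vec d => S • z := measurable_const_smul S
  have hray : Measurable fun q : ℝ × Vec d => q.1 • q.2 := measurable_fst.smul measurable_snd
  have hboundary := hc.enorm.eLpNorm_mul_lintegral_comp_add_le
    (ν := volume.restrict (tsupport φ)) hu_meas hscale (ENNReal.ofReal (B / S)) hp
  have hbulk := hper.laplV.enorm.eLpNorm_mul_lintegral_comp_add_le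
    (ν := (volume.restrict (Set.Ioc 0 S)).prod (volume.restrict (tsupport φ)))
    hlapl_meas hray (ENNReal.ofReal B) hp
  rw [← Set.univ_prod_univ, Measure.prod_prod] at hbulk
  simp only [Measure.restrict_apply_univ, Real.volume_Ioc, sub_zero, eLpNorm_enorm]
    at hboundary hbulk
  have hadd := (eLpNorm_add_le
    ((measurable_lintegral_comp_add hu_meas hscale).const_mul _).aestronglyMeasurable
    ((measurable_lintegral_comp_add hlapl_meas hray).const_mul _).aestronglyMeasurable hp).trans
    (add_le_add hboundary hbulk)
  exact (eLpNorm_mono_enorm fun x => hφ.enorm_gradV_le_add hB hu x c hS).trans hadd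

theorem exists_eLpNorm_gradV_le_add (d : ℕ) : ∃ C : ℝ, 0 ≤ C ∧ ∀ {p : ℝ≥0∞}, 1 ≤ p →
    ∀ {u : Vec d → ℝ}, ContDiff ℝ 2 u → ZPer u → ∀ (c : ℝ) {S : ℝ}, 0 < S →
      eLpNorm (gradV u) p (cubeMeasure d) ≤
        ENNReal.ofReal (C / S) * eLpNorm (fun x => u x - c) p (cubeMeasure d) +
        ENNReal.ofReal (C * S) * eLpNorm (laplV u) p (cubeMeasure d) := by
  obtain ⟨φ, hφ⟩ := exists_isRadialKernel d
  obtain ⟨B, hB⟩ := hφ.exists_norm_gradV_le_and_norm_smul_le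
  have hB0 : 0 ≤ B := (norm_nonneg _).trans (hB 0).1
  obtain ⟨V, hV⟩ : ∃ V : NNReal, volume (tsupport φ) = V :=
    ⟨_, (ENNReal.coe_toNNReal hφ.hasCompactSupport.isCompact.measure_lt_top.ne).symm⟩
  refine ⟨B * V, by positivity, fun {p} hp {u} hu hper c S hS => ?_⟩
  have h := hφ.eLpNorm_gradV_le_add hB hp hu hper c hS
  rwa [hV, ← ENNReal.ofReal_coe_nnreal, ← ENNReal.ofReal_mul (by positivity),
    ← ENNReal.ofReal_mul hS.le, ← ENNReal.ofReal_mul hB0, div_mul_eq_mul_div, mul_comm S,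
    ← mul_assoc] at h

theorem enorm_sub_le_lintegral_gradV (hu : ContDiff ℝ 1 u) (x : Vec d) {y : Vec d}
    (hy : ‖y‖ₑ ≤ 1) :
    ‖u (x + y) - u x‖ₑ ≤ d * ∫⁻ s in Set.Ioc (0 : ℝ) 1, ‖gradV u (x + s • y)‖ₑ := by
  have hsegment := integral_fderiv_segment hu x y 1
  rw [one_smul, intervalIntegral.integral_of_le zero_le_one] at hsegment
  rw [← hsegment, ← lintegral_const_mul' _ _ (ENNReal.natCast_ne_top d)]
  refine (enorm_integral_le_lintegral_enorm _).trans (lintegral_mono fun s => ?_)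
  rw [← dotV_gradV]
  calc ‖dotV (gradV u (x + s • y)) y‖ₑ ≤ d * ‖gradV u (x + s • y)‖ₑ * ‖y‖ₑ := enorm_dotV_le _ _
    _ ≤ d * ‖gradV u (x + s • y)‖ₑ * 1 := by gcongr
    _ = d * ‖gradV u (x + s • y)‖ₑ := mul_one _

theorem enorm_sub_integral_le_lintegral_gradV (hu : ContDiff ℝ 1 u) (hper : ZPer u) (x : Vec d) :
    ‖u x - ∫ y, u y ∂cubeMeasure d‖ₑ ≤ d * ∫⁻ q, ‖gradV u (x + q.1 • q.2)‖ₑ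
      ∂(volume.restrict (Set.Ioc (0 : ℝ) 1)).prod (cubeMeasure d) := by
  have hcont := continuous_gradV hu
  have hshift : Integrable (fun y => u (x + y)) (cubeMeasure d) :=
    (hu.continuous.comp (continuous_const.add continuous_id)).continuousOn.integrableOn_compact
      isCompact_Icc
  have hmean : ∫ y, u y ∂cubeMeasure d - u x = ∫ y, (u (x + y) - u x) ∂cubeMeasure d := by
    rw [integral_sub hshift (integrable_const _), integral_const, probReal_univ, one_smul]
    simp only [add_comm x, hper.integral_comp_add_right]
  have hcube : ∀ y ∈ fundCube d, ‖y‖ₑ ≤ 1 := fun y hy => enorm_pi_le_iff.2 fun i => by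
    rw [Real.enorm_of_nonneg (hy.1 i), ENNReal.ofReal_le_one]
    exact hy.2 i
  rw [enorm_sub_rev, hmean, lintegral_prod_symm _ (by fun_prop),
    ← lintegral_const_mul' _ _ (ENNReal.natCast_ne_top d)]
  exact (enorm_integral_le_lintegral_enorm _).trans <|
    setLIntegral_mono' measurableSet_Icc fun y hy =>
      enorm_sub_le_lintegral_gradV hu x (hcube y hy)

theorem eLpNorm_sub_integral_le_eLpNorm_gradV (hp : 1 ≤ p) (hu : ContDiff ℝ 1 u) (hper : ZPer u) :
    eLpNorm (fun x => u x - ∫ y, u y ∂cubeMeasure d) p (cubeMeasure d) ≤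
      d * eLpNorm (gradV u) p (cubeMeasure d) := by
  have h := hper.gradV.enorm.eLpNorm_mul_lintegral_comp_add_le
    (ν := (volume.restrict (Set.Ioc (0 : ℝ) 1)).prod (cubeMeasure d))
    (τ := fun q : ℝ × Vec d => q.1 • q.2) (continuous_gradV hu).enorm.measurable
    (measurable_fst.smul measurable_snd) d hp
  rw [← Set.univ_prod_univ, Measure.prod_prod, Measure.restrict_apply_univ, Real.volume_Ioc,
    sub_zero, ENNReal.ofReal_one, measure_univ, mul_one, mul_one, eLpNorm_enorm] at h
  exact (eLpNorm_mono_enorm fun x => enorm_sub_integral_le_lintegral_gradV hu hper x).trans h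

theorem exists_eLpNorm_gradV_le_eLpNorm_laplV (d : ℕ) : ∃ C : ℝ, 0 ≤ C ∧
    ∀ {p : ℝ≥0∞}, 1 ≤ p → ∀ {u : Vec d → ℝ}, ContDiff ℝ 2 u → ZPer u →
      eLpNorm (gradV u) p (cubeMeasure d) ≤
        ENNReal.ofReal C * eLpNorm (laplV u) p (cubeMeasure d) := by
  obtain ⟨C, hC, hinterp⟩ := exists_eLpNorm_gradV_le_add d
  -- This scale makes the term coming from Poincaré's inequality at most half of the left side.
  obtain ⟨S, hS⟩ : ∃ S, S = 2 * C * d + 1 := ⟨_, rfl⟩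
  have hS0 : 0 < S := by rw [hS]; positivity
  have hsmall : ENNReal.ofReal (C / S) * d ≤ 2⁻¹ := by
    rw [← ENNReal.ofReal_natCast d, ← ENNReal.ofReal_mul (by positivity), ← ENNReal.ofReal_ofNat 2,
      ← ENNReal.ofReal_inv_of_pos two_pos]
    refine ENNReal.ofReal_le_ofReal ?_
    rw [div_mul_eq_mul_div, div_le_iff₀ hS0, hS]
    linarith
  refine ⟨2 * (C * S), by positivity, fun {p} hp {u} hu hper => ?_⟩
  have hgrad := continuous_gradV (hu.of_le one_le_two)
  have hpoincare := eLpNorm_sub_integral_le_eLpNorm_gradV hp (hu.of_le one_le_two) hper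
  rw [ENNReal.ofReal_mul zero_le_two, ENNReal.ofReal_ofNat, mul_assoc]
  refine ennreal_le_two_mul_of_le_half_add
    (eLpNorm_cubeMeasure_lt_top_of_continuous hgrad p).ne ?_
  refine (hinterp hp hu hper (∫ y, u y ∂cubeMeasure d) hS0).trans (add_le_add_left ?_ _)
  calc ENNReal.ofReal (C / S) * eLpNorm (fun x => u x - ∫ y, u y ∂cubeMeasure d) p (cubeMeasure d)
      ≤ ENNReal.ofReal (C / S) * (d * eLpNorm (gradV u) p (cubeMeasure d)) := by gcongr
    _ = ENNReal.ofReal (C / S) * d * eLpNorm (gradV u) p (cubeMeasure d) := (mul_assoc _ _ _).symm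
    _ ≤ 2⁻¹ * eLpNorm (gradV u) p (cubeMeasure d) := by gcongr
    _ = eLpNorm (gradV u) p (cubeMeasure d) / 2 := by rw [mul_comm, div_eq_mul_inv]

end EllipticEstimate

section BilinearEstimate

variable {d : ℕ} {a : Vec d → ℝ}

theorem sSup_norm_iteratedFDeriv_nonneg (n : ℕ) (a : Vec d → ℝ) :
    0 ≤ sSup ((fun x => ‖iteratedFDeriv ℝ n a x‖) '' fundCube d) :=
  Real.sSup_nonneg (Set.forall_mem_image.2 fun _ _ => norm_nonneg _)

theorem CkN_nonneg (N : ℕ) (a : Vec d → ℝ) : 0 ≤ CkN N a :=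
  Finset.sum_nonneg fun n _ => sSup_norm_iteratedFDeriv_nonneg n a

theorem norm_iteratedFDeriv_le_CkN {n N : ℕ} (hn : n ≤ N) (ha : ContDiff ℝ N a) {x : Vec d}
    (hx : x ∈ fundCube d) : ‖iteratedFDeriv ℝ n a x‖ ≤ CkN N a := by
  have hcont := ha.continuous_iteratedFDeriv (Nat.cast_le.2 hn)
  calc ‖iteratedFDeriv ℝ n a x‖
      ≤ sSup ((fun x => ‖iteratedFDeriv ℝ n a x‖) '' fundCube d) :=
        le_csSup (isCompact_Icc.bddAbove_image hcont.norm.continuousOn)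
          (Set.mem_image_of_mem _ hx)
    _ ≤ CkN N a := Finset.single_le_sum
        (f := fun n => sSup ((fun x => ‖iteratedFDeriv ℝ n a x‖) '' fundCube d))
        (fun n _ => sSup_norm_iteratedFDeriv_nonneg n a)
        (Finset.mem_range.2 (Nat.lt_succ_of_le hn))

theorem eLpNorm_smul_le_CkN (ha : ContDiff ℝ 1 a) (v : Vec d → Vec d) (p : ℝ≥0∞) :
    eLpNorm (fun x => a x • v x) p (cubeMeasure d) ≤
      ENNReal.ofReal (CkN 1 a) * eLpNorm v p (cubeMeasure d) := by
  refine eLpNorm_le_mul_eLpNorm_of_ae_le_mul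
    (ae_restrict_of_forall_mem measurableSet_Icc fun x hx => ?_) p
  have hax := norm_iteratedFDeriv_le_CkN zero_le_one ha hx
  rw [norm_iteratedFDeriv_zero] at hax
  rw [norm_smul]
  gcongr

theorem eLpNorm_dotV_gradV_le_CkN (ha : ContDiff ℝ 1 a) (v : Vec d → Vec d) (p : ℝ≥0∞) :
    eLpNorm (fun x => dotV (gradV a x) (v x)) p (cubeMeasure d) ≤
      ENNReal.ofReal (d * CkN 1 a) * eLpNorm v p (cubeMeasure d) := by
  refine eLpNorm_le_mul_eLpNorm_of_ae_le_mul
    (ae_restrict_of_forall_mem measurableSet_Icc fun x hx => ?_) p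
  have hax := norm_iteratedFDeriv_le_CkN le_rfl ha hx
  rw [norm_iteratedFDeriv_one] at hax
  calc ‖dotV (gradV a x) (v x)‖ ≤ d * ‖gradV a x‖ * ‖v x‖ := norm_dotV_le _ _
    _ ≤ d * CkN 1 a * ‖v x‖ := by
      gcongr
      exact (norm_gradV_le_norm_fderiv a x).trans hax

theorem exists_eLpNorm_gradV_le_CkN_mul (d : ℕ) : ∃ C : ℝ, 0 ≤ C ∧ ∀ {p : ℝ≥0∞}, 1 ≤ p →
    ∀ {a u : Vec d → ℝ} {v : Vec d → Vec d}, ContDiff ℝ 1 a →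
      AEStronglyMeasurable v (cubeMeasure d) → ContDiff ℝ 2 u → ZPer u →
      (∀ x, laplV u x = dotV (gradV a x) (v x) - ∫ y, dotV (gradV a y) (v y) ∂cubeMeasure d) →
      eLpNorm (gradV u) p (cubeMeasure d) ≤
        ENNReal.ofReal (C * CkN 1 a) * eLpNorm v p (cubeMeasure d) := by
  obtain ⟨C, hC, helliptic⟩ := exists_eLpNorm_gradV_le_eLpNorm_laplV d
  refine ⟨C * (2 * d), by positivity, fun {p} hp {a u v} ha hv hu hper hlapl => ?_⟩
  have hforcing := aestronglyMeasurable_dotV (continuous_gradV ha).aestronglyMeasurable hv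
  calc eLpNorm (gradV u) p (cubeMeasure d)
      ≤ ENNReal.ofReal C * eLpNorm (laplV u) p (cubeMeasure d) := helliptic hp hu hper
    _ ≤ ENNReal.ofReal C *
        (2 * eLpNorm (fun x => dotV (gradV a x) (v x)) p (cubeMeasure d)) := by
      rw [funext hlapl]
      gcongr
      exact eLpNorm_sub_integral_le hp hforcing
    _ ≤ ENNReal.ofReal C *
        (2 * (ENNReal.ofReal (d * CkN 1 a) * eLpNorm v p (cubeMeasure d))) := by
      gcongr
      exact eLpNorm_dotV_gradV_le_CkN ha v p
    _ = ENNReal.ofReal (C * (2 * d) * CkN 1 a) * eLpNorm v p (cubeMeasure d) := by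
      rw [mul_assoc C, mul_assoc, ENNReal.ofReal_mul hC, ENNReal.ofReal_mul zero_le_two,
        ENNReal.ofReal_ofNat]
      ring

theorem bilinear_antidivergence_bound_general (d : ℕ) : ∃ C : ℝ, 0 < C ∧ ∀ {r : ℝ≥0∞}, 1 ≤ r →
    ∀ {a u : Vec d → ℝ} {v : Vec d → Vec d}, ContDiff ℝ 1 a →
      AEStronglyMeasurable v (cubeMeasure d) → ContDiff ℝ 2 u → ZPer u →
      (∀ x, laplV u x =
        dotV (gradV a x) (v x) - ∫ y in fundCube d, dotV (gradV a y) (v y)) →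
      spLp r (fun x => a x • v x - gradV u x) ≤ ENNReal.ofReal (C * CkN 1 a) * spLp r v := by
  obtain ⟨C, hC, hpotential⟩ := exists_eLpNorm_gradV_le_CkN_mul d
  refine ⟨1 + C, by positivity, fun {r} hr {a u v} ha hv hu hper hlapl => ?_⟩
  have hN := CkN_nonneg 1 a
  rw [spLp_eq_eLpNorm hr, spLp_eq_eLpNorm hr]
  calc eLpNorm (fun x => a x • v x - gradV u x) r (cubeMeasure d)
      ≤ eLpNorm (fun x => a x • v x) r (cubeMeasure d) + eLpNorm (gradV u) r (cubeMeasure d) :=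
        eLpNorm_sub_le (ha.continuous.aestronglyMeasurable.smul hv)
          (continuous_gradV (hu.of_le one_le_two)).aestronglyMeasurable hr
    _ ≤ ENNReal.ofReal (CkN 1 a) * eLpNorm v r (cubeMeasure d) +
        ENNReal.ofReal (C * CkN 1 a) * eLpNorm v r (cubeMeasure d) :=
        add_le_add (eLpNorm_smul_le_CkN ha v r) (hpotential hr ha hv hu hper hlapl)
    _ = ENNReal.ofReal ((1 + C) * CkN 1 a) * eLpNorm v r (cubeMeasure d) := by
        rw [← add_mul, ← ENNReal.ofReal_add hN (mul_nonneg hC hN), add_mul, one_mul]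

end BilinearEstimate

/-- **Bound for the bilinear anti-divergence operator** (Lemma 2.2): for `d ≥ 2`
and `r ∈ [1,∞]` there is `C = C(d,r)` with
`‖𝓑(a,f)‖_{L^r} ≤ C‖a‖_{C¹}‖ℛf‖_{L^r}` for all `a, f ∈ C^∞(𝕋^d)`, where
`ℛf = ∇u_f` (with `Δu_f = f − ⨍f`, `u_f` periodic with zero mean) and
`𝓑(a,f) = aℛf − ℛ(∇a·ℛf)`. -/
theorem bilinear_antidivergence_bound (d : ℕ) (hd : 2 ≤ d)
    (r : ℝ≥0∞) (hr : 1 ≤ r) :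
    ∃ C : ℝ, 0 < C ∧
      ∀ (a f uf ug : Vec d → ℝ),
        ContDiff ℝ (⊤ : ℕ∞) a → ZPer a →
        ContDiff ℝ (⊤ : ℕ∞) f → ZPer f →
        ContDiff ℝ (⊤ : ℕ∞) uf → ZPer uf → (∫ x in fundCube d, uf x) = 0 →
        (∀ x, laplV uf x = f x - ∫ y in fundCube d, f y) →
        ContDiff ℝ (⊤ : ℕ∞) ug → ZPer ug → (∫ x in fundCube d, ug x) = 0 →
        (∀ x, laplV ug x = dotV (gradV a x) (gradV uf x)
          - ∫ y in fundCube d, dotV (gradV a y) (gradV uf y)) →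
        spLp r (fun x => a x • gradV uf x - gradV ug x)
          ≤ ENNReal.ofReal (C * CkN 1 a) * spLp r (gradV uf) := by
  obtain ⟨C, hC, hbound⟩ := bilinear_antidivergence_bound_general d
  refine ⟨C, hC, fun a f uf ug ha _ _ _ huf _ _ _ hug hugper _ hlapl => ?_⟩
  have hgrad := continuous_gradV (huf.of_le ENat.LEInfty.out)
  exact hbound hr (ha.of_le ENat.LEInfty.out) hgrad.aestronglyMeasurable
    (hug.of_le ENat.LEInfty.out) hugper hlapl
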